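/- arXiv:1505.02978 — 2 statements merged into one kernel-verified Lean document; each statement's English description precedes it below -/
import Mathlib

section
/- Let γ : ℝ × [0,T) → ℝ² be a curve diffusion flow such that at every time t the curve γ(·,t) has winding number zero, i.e. ∫₀^{2π} κ |∂_u γ| du = 0. Then for all t ∈ [0,T) one has L(t)⁴ ≤ L(0)⁴ − 768 π² t; in particular T ≤ L(0)⁴ / (768 π²). -/
open Real MeasureTheory Filter

/-- Euclidean inner product on `ℝ × ℝ`. -/
def innerP (a b : ℝ × ℝ) : ℝ := a.1 * b.1 + a.2 * b.2

/-- Speed `|γ'|` of a plane curve in a general parametrisation. -/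
noncomputable def speed (γ : ℝ → ℝ × ℝ) (u : ℝ) : ℝ :=
  Real.sqrt ((deriv γ u).1 ^ 2 + (deriv γ u).2 ^ 2)

/-- Unit normal `ν = |γ'|⁻¹ (y', -x')`. -/
noncomputable def nuG (γ : ℝ → ℝ × ℝ) (u : ℝ) : ℝ × ℝ :=
  ((deriv γ u).2 / speed γ u, -(deriv γ u).1 / speed γ u)

/-- Arc-length derivative `∂_s = |γ'|⁻¹ ∂_u` of a scalar function. -/
noncomputable def arcD (γ : ℝ → ℝ × ℝ) (f : ℝ → ℝ) (u : ℝ) : ℝ :=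
  (speed γ u)⁻¹ * deriv f u

/-- Arc-length derivative of a vector-valued function. -/
noncomputable def arcDV (γ : ℝ → ℝ × ℝ) (F : ℝ → ℝ × ℝ) (u : ℝ) : ℝ × ℝ :=
  (speed γ u)⁻¹ • deriv F u

/-- Curvature `κ = ⟨∂_s² γ, ν⟩`. -/
noncomputable def curvG (γ : ℝ → ℝ × ℝ) (u : ℝ) : ℝ :=
  innerP (arcDV γ (arcDV γ γ) u) (nuG γ u)

/-- `κ_s`, the arc-length derivative of the curvature. -/
noncomputable def curvGS (γ : ℝ → ℝ × ℝ) (u : ℝ) : ℝ := arcD γ (curvG γ) u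

/-- `κ_ss`, the second arc-length derivative of the curvature. -/
noncomputable def curvGSS (γ : ℝ → ℝ × ℝ) (u : ℝ) : ℝ := arcD γ (curvGS γ) u

/-- Length of the closed curve `γ(·,t)` over one period `[0, 2π]`. -/
noncomputable def clen (γ : ℝ → ℝ → ℝ × ℝ) (t : ℝ) : ℝ :=
  ∫ u in (0:ℝ)..(2 * Real.pi), speed (fun u' => γ u' t) u

/-!
Winding number zero means that the tangent angle of `γ(·,t)` is a periodic function of the
parameter. Let `f` be the tangent angle minus its arc-length mean. The curve closes up, so
`∫ cos f ds = 0`, and `cos f ≥ 1 - f² / 2` gives `∫ f² ds ≥ 2 L`. As `f_s = ± κ`, the sharp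
Wirtinger inequality applied to `f` yields `L ∫ κ² ds ≥ 8 π²`; applied to `κ`, which also has mean
zero, it yields `L³ ∫ κ_s² ds ≥ 32 π⁴`. By the first variation formula the flow satisfies
`L' = -∫ κ_s² ds`, so `(L⁴)' ≤ -128 π⁴`, and `128 π⁴ ≥ 768 π²`.
-/

section PairValued

variable {E G : Type*} [NormedAddCommGroup E] [NormedSpace ℝ E] [NormedAddCommGroup G]
  [NormedSpace ℝ G] {F : ℝ → E × G} {F' : E × G} {u : ℝ}

theorem hasDerivAt_fst_comp (h : HasDerivAt F F' u) : HasDerivAt (fun w => (F w).1) F'.1 u :=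
  h.fst

theorem hasDerivAt_snd_comp (h : HasDerivAt F F' u) : HasDerivAt (fun w => (F w).2) F'.2 u :=
  h.snd

end PairValued

section PeriodicFunctions

variable {E : Type*} [NormedAddCommGroup E] [NormedSpace ℝ E] {P : ℝ}

theorem periodic_deriv {F : ℝ → E} (hF : F.Periodic P) : (deriv F).Periodic P := fun u => by
  rw [← deriv_comp_add_const]
  exact congrArg (deriv · u) (funext hF)

theorem integral_deriv_eq_zero_of_periodic [CompleteSpace E] {F : ℝ → E} (hF : ContDiff ℝ 1 F)
    (hFp : F.Periodic P) : ∫ u in 0..P, deriv F u = 0 := by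
  rw [intervalIntegral.integral_deriv_eq_sub (fun u _ => hF.differentiable (by simp) u)
    (hF.continuous_deriv_one.intervalIntegrable _ _), ← zero_add P, hFp 0, sub_self]

theorem periodic_of_integral_deriv_eq_zero [CompleteSpace E] {F : ℝ → E} (hF : ContDiff ℝ 1 F)
    (hFp : (deriv F).Periodic P) (hint : ∫ u in 0..P, deriv F u = 0) : F.Periodic P := by
  intro u
  rw [← sub_eq_zero, ← intervalIntegral.integral_deriv_eq_sub
    (fun w _ => hF.differentiable (by simp) w) (hF.continuous_deriv_one.intervalIntegrable _ _),
    hFp.intervalIntegral_add_eq u 0, zero_add, hint]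

theorem integral_mul_deriv_eq_neg_of_periodic {f g : ℝ → ℝ} (hf : ContDiff ℝ 1 f)
    (hg : ContDiff ℝ 1 g) (hfp : f.Periodic P) (hgp : g.Periodic P) :
    ∫ u in 0..P, f u * deriv g u = -∫ u in 0..P, deriv f u * g u := by
  rw [intervalIntegral.integral_mul_deriv_eq_deriv_mul
    (fun u _ => (hf.differentiable (by simp) u).hasDerivAt)
    (fun u _ => (hg.differentiable (by simp) u).hasDerivAt)
    (hf.continuous_deriv_one.intervalIntegrable _ _)
    (hg.continuous_deriv_one.intervalIntegrable _ _), hfp.eq, hgp.eq, sub_self, zero_sub]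

theorem integral_innerP_deriv_eq_neg_of_periodic {F G : ℝ → ℝ × ℝ} (hF : ContDiff ℝ 1 F)
    (hG : ContDiff ℝ 1 G) (hFp : F.Periodic P) (hGp : G.Periodic P) :
    ∫ u in 0..P, innerP (F u) (deriv G u) = -∫ u in 0..P, innerP (deriv F u) (G u) := by
  have hfst : ∀ {H : ℝ → ℝ × ℝ}, ContDiff ℝ 1 H →
      ∀ u, (deriv H u).1 = deriv (fun u => (H u).1) u := fun hH u =>
    (hasDerivAt_fst_comp (hH.differentiable (by simp) u).hasDerivAt).deriv.symm
  have hsnd : ∀ {H : ℝ → ℝ × ℝ}, ContDiff ℝ 1 H →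
      ∀ u, (deriv H u).2 = deriv (fun u => (H u).2) u := fun hH u =>
    (hasDerivAt_snd_comp (hH.differentiable (by simp) u).hasDerivAt).deriv.symm
  have hFc := hF.continuous
  have hGc := hG.continuous
  have := hF.continuous_deriv_one
  have := hG.continuous_deriv_one
  simp_rw [innerP]
  rw [intervalIntegral.integral_add (Continuous.intervalIntegrable (by fun_prop) _ _)
    (Continuous.intervalIntegrable (by fun_prop) _ _),
    intervalIntegral.integral_add (Continuous.intervalIntegrable (by fun_prop) _ _)
    (Continuous.intervalIntegrable (by fun_prop) _ _), neg_add]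
  simp_rw [hfst hF, hfst hG, hsnd hF, hsnd hG]
  rw [integral_mul_deriv_eq_neg_of_periodic hF.fst hG.fst (fun u => by rw [hFp u])
    fun u => by rw [hGp u], integral_mul_deriv_eq_neg_of_periodic hF.snd hG.snd
    (fun u => by rw [hFp u]) fun u => by rw [hGp u]]

theorem exists_add_half_period_eq {g : ℝ → ℝ} (hg : Continuous g) (hgp : g.Periodic P) :
    ∃ x, g (x + P / 2) = g x := by
  have hcont : ContinuousOn (fun x => g (x + P / 2) - g x) (Set.uIcc 0 (P / 2)) := by fun_prop
  have hzero : (0 : ℝ) ∈ Set.uIcc (g (0 + P / 2) - g 0) (g (P / 2 + P / 2) - g (P / 2)) := by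
    rw [zero_add, add_halves, hgp.eq, Set.mem_uIcc]
    rcases le_total (g (P / 2)) (g 0) with h | h
    · exact .inl ⟨by linarith, by linarith⟩
    · exact .inr ⟨by linarith, by linarith⟩
  obtain ⟨x, -, hx⟩ := intermediate_value_uIcc hcont hzero
  exact ⟨x, sub_eq_zero.1 hx⟩

end PeriodicFunctions

section WeightedInequalities

variable {a b P : ℝ} {f v : ℝ → ℝ}

-- Add the integral of `(ψ f²)'`, which is zero: the integrand becomes `(f' + ψ f v)² / v`.
theorem mul_integral_sq_le_of_riccati {μ : ℝ} {ψ : ℝ → ℝ} (hab : a ≤ b) (hf : ContDiff ℝ 1 f)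
    (hv : Continuous v) (hpos : ∀ u, 0 < v u)
    (hψ : ∀ u ∈ Set.Icc a b, HasDerivAt ψ ((μ + ψ u ^ 2) * v u) u) (ha : f a = 0) (hb : f b = 0) :
    μ * ∫ u in a..b, f u ^ 2 * v u ≤ ∫ u in a..b, deriv f u ^ 2 / v u := by
  rw [← Set.uIcc_of_le hab] at hψ
  have hfc := hf.continuous
  have := hf.continuous_deriv_one
  have hψc : ContinuousOn ψ (Set.uIcc a b) := fun u hu => (hψ u hu).continuousAt.continuousWithinAt
  set D : ℝ → ℝ := fun u => (μ + ψ u ^ 2) * v u * f u ^ 2 + ψ u * (2 * f u * deriv f u) with hD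
  have hDi : IntervalIntegrable D volume a b := ContinuousOn.intervalIntegrable (by fun_prop)
  have hD0 : ∫ u in a..b, D u = 0 := by
    rw [intervalIntegral.integral_eq_sub_of_hasDerivAt (f := fun u => ψ u * f u ^ 2) _ hDi]
    · simp [ha, hb]
    · intro u hu
      convert! (hψ u hu).mul ((hf.differentiable (by simp) u).hasDerivAt.pow 2) using 1
      simp [hD]
  have henergy : IntervalIntegrable (fun u => deriv f u ^ 2 / v u) volume a b :=
    (Continuous.div (by fun_prop) hv fun u => (hpos u).ne').intervalIntegrable _ _
  have hmass : IntervalIntegrable (fun u => μ * (f u ^ 2 * v u)) volume a b :=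
    Continuous.intervalIntegrable (by fun_prop) _ _
  have hsquare : ∀ u, deriv f u ^ 2 / v u - μ * (f u ^ 2 * v u) + D u
      = (deriv f u + ψ u * f u * v u) ^ 2 / v u := fun u => by
    have := (hpos u).ne'
    simp only [hD]
    field_simp
    ring
  have hnonneg : 0 ≤ ∫ u in a..b, (deriv f u ^ 2 / v u - μ * (f u ^ 2 * v u) + D u) :=
    intervalIntegral.integral_nonneg hab fun u _ => by
      rw [hsquare]
      exact div_nonneg (sq_nonneg _) (hpos u).le
  rw [intervalIntegral.integral_add (henergy.sub hmass) hDi,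
    intervalIntegral.integral_sub henergy hmass, hD0,
    intervalIntegral.integral_const_mul] at hnonneg
  linarith

theorem exists_riccati_of_mul_integral_lt_pi {m : ℝ} (hv : Continuous v) (hpos : ∀ u, 0 < v u)
    (hm : 0 ≤ m) (hmπ : m * ∫ u in a..b, v u < π) :
    ∃ ψ : ℝ → ℝ, ∀ u ∈ Set.Icc a b, HasDerivAt ψ ((m ^ 2 + ψ u ^ 2) * v u) u := by
  set s : ℝ → ℝ := fun u => ∫ w in a..u, v w with hs
  have hsd : ∀ u, HasDerivAt s (v u) u := fun u => (hv.integral_hasStrictDerivAt a u).hasDerivAt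
  have hmono : Monotone s := (strictMono_of_deriv_pos fun u => (hsd u).deriv ▸ hpos u).monotone
  set φ : ℝ → ℝ := fun u => m * (s u - s b / 2) with hφ
  refine ⟨fun u => m * tan (φ u), fun u hu => ?_⟩
  have hs0 : 0 ≤ s u := by simpa [hs] using hmono hu.1
  have hcos : cos (φ u) ≠ 0 := by
    have hmass := mul_le_mul_of_nonneg_left (hmono hu.2) hm
    have hm0 := mul_nonneg hm hs0
    refine (cos_pos_of_mem_Ioo ⟨?_, ?_⟩).ne' <;> simp only [hφ] <;> linarith
  have hφd : HasDerivAt φ (m * v u) u := ((hsd u).sub_const _).const_mul m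
  convert! ((hasDerivAt_tan hcos).comp u hφd).const_mul m using 1
  simp only [tan_eq_sin_div_cos]
  field_simp
  rw [cos_sq_add_sin_sq, mul_one]

theorem pi_sq_mul_integral_sq_le_of_eq_zero (hab : a < b) (hf : ContDiff ℝ 1 f)
    (hv : Continuous v) (hpos : ∀ u, 0 < v u) (ha : f a = 0) (hb : f b = 0) :
    π ^ 2 * ∫ u in a..b, f u ^ 2 * v u ≤
      (∫ u in a..b, v u) ^ 2 * ∫ u in a..b, deriv f u ^ 2 / v u := by
  set S := ∫ u in a..b, v u
  have hS : 0 < S := intervalIntegral.intervalIntegral_pos_of_pos (hv.intervalIntegrable _ _)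
    hpos hab
  have hsub : ∀ k ∈ Set.Ioo 0 π, k ^ 2 * ∫ u in a..b, f u ^ 2 * v u ≤
      S ^ 2 * ∫ u in a..b, deriv f u ^ 2 / v u := by
    intro k hk
    obtain ⟨ψ, hψ⟩ := exists_riccati_of_mul_integral_lt_pi (a := a) (b := b) hv hpos
      (div_pos hk.1 hS).le ((div_mul_cancel₀ k hS.ne').trans_lt hk.2)
    have hk := mul_integral_sq_le_of_riccati hab.le hf hv hpos hψ ha hb
    rwa [div_pow, div_mul_eq_mul_div, div_le_iff₀' (by positivity)] at hk
  have hlim : Tendsto (fun k : ℝ => k ^ 2 * ∫ u in a..b, f u ^ 2 * v u) (nhdsWithin π (Set.Iio π))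
      (nhds (π ^ 2 * ∫ u in a..b, f u ^ 2 * v u)) :=
    (Continuous.tendsto (by fun_prop) π).mono_left nhdsWithin_le_nhds
  exact le_of_tendsto hlim (eventually_of_mem (Ioo_mem_nhdsLT pi_pos) hsub)

theorem exists_orderIso_eq_integral (hP : 0 < P) (hv : Continuous v) (hpos : ∀ u, 0 < v u)
    (hvp : v.Periodic P) : ∃ e : ℝ ≃o ℝ, ∀ u, e u = ∫ w in 0..u, v w := by
  have hd : ∀ u, HasDerivAt (fun u => ∫ w in 0..u, v w) (v u) u := fun u =>
    (hv.integral_hasStrictDerivAt 0 u).hasDerivAt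
  have hmono := strictMono_of_deriv_pos fun u => (hd u).deriv ▸ hpos u
  have htotal : 0 < ∫ u in 0..P, v u :=
    intervalIntegral.intervalIntegral_pos_of_pos (hv.intervalIntegrable _ _) hpos hP
  have hsurj := (continuous_iff_continuousAt.2 fun u => (hd u).continuousAt).surjective
    (hvp.tendsto_atTop_intervalIntegral_of_pos htotal hP)
    (hvp.tendsto_atBot_intervalIntegral_of_pos htotal hP)
  exact ⟨hmono.orderIsoOfSurjective _ hsurj, fun _ => rfl⟩

theorem exists_eq_and_integral_eq_half (hP : 0 < P) (hf : Continuous f) (hv : Continuous v)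
    (hpos : ∀ u, 0 < v u) (hfp : f.Periodic P) (hvp : v.Periodic P) :
    ∃ a b, a < b ∧ b < a + P ∧ f a = f b ∧
      (∫ u in a..b, v u) = (∫ u in 0..P, v u) / 2 := by
  obtain ⟨e, he⟩ := exists_orderIso_eq_integral hP hv hpos hvp
  set L := ∫ u in 0..P, v u
  have hL : 0 < L :=
    intervalIntegral.intervalIntegral_pos_of_pos (hv.intervalIntegrable _ _) hpos hP
  have hshift : ∀ u, e (u + P) = e u + L := fun u => by
    simpa [he, L, add_comm] using
      hvp.intervalIntegral_add_eq_add 0 u fun _ _ => hv.intervalIntegrable _ _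
  have hshift' : ∀ x, e.symm (x + L) = e.symm x + P := fun x => by
    rw [e.symm_apply_eq, hshift, e.apply_symm_apply]
  obtain ⟨x, hx⟩ := exists_add_half_period_eq (g := fun x => f (e.symm x)) (P := L)
    (hf.comp e.symm.continuous) fun x => by simp only [hshift', hfp (e.symm x)]
  refine ⟨e.symm x, e.symm (x + L / 2), e.symm.strictMono (by linarith), ?_, hx.symm, ?_⟩
  · rw [← hshift']
    exact e.symm.strictMono (by linarith)
  · rw [← intervalIntegral.integral_interval_sub_left (hv.intervalIntegrable 0 _)
      (hv.intervalIntegrable _ _), ← he, ← he, e.apply_symm_apply, e.apply_symm_apply]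
    ring

theorem integral_sq_le_integral_sub_sq_of_integral_eq_zero (hab : a ≤ b) (hf : Continuous f)
    (hv : Continuous v) (hnonneg : ∀ u, 0 ≤ v u) (hmean : ∫ u in a..b, f u * v u = 0) (k : ℝ) :
    ∫ u in a..b, f u ^ 2 * v u ≤ ∫ u in a..b, (f u - k) ^ 2 * v u := by
  have hexpand : ∀ u, (f u - k) ^ 2 * v u
      = f u ^ 2 * v u - 2 * k * (f u * v u) + k ^ 2 * v u := fun u => by ring
  have htotal : 0 ≤ ∫ u in a..b, v u := intervalIntegral.integral_nonneg hab fun u _ => hnonneg u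
  simp_rw [hexpand]
  rw [intervalIntegral.integral_add, intervalIntegral.integral_sub,
    intervalIntegral.integral_const_mul, intervalIntegral.integral_const_mul, hmean]
  · linarith [mul_nonneg (sq_nonneg k) htotal]
  all_goals exact Continuous.intervalIntegrable (by fun_prop) _ _

-- `f` takes equal values at two points that halve the weight; subtract that value and apply the
-- Dirichlet inequality on each half.
theorem four_mul_pi_sq_mul_integral_sq_le (hP : 0 < P) (hf : ContDiff ℝ 1 f) (hv : Continuous v)
    (hpos : ∀ u, 0 < v u) (hfp : f.Periodic P) (hvp : v.Periodic P)
    (hmean : ∫ u in 0..P, f u * v u = 0) :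
    4 * π ^ 2 * ∫ u in 0..P, f u ^ 2 * v u ≤
      (∫ u in 0..P, v u) ^ 2 * ∫ u in 0..P, deriv f u ^ 2 / v u := by
  obtain ⟨a, b, hab, hba, hfab, hhalf⟩ :=
    exists_eq_and_integral_eq_half hP hf.continuous hv hpos hfp hvp
  have hsplit : ∀ g : ℝ → ℝ, g.Periodic P → Continuous g →
      ∫ u in 0..P, g u = (∫ u in a..b, g u) + ∫ u in b..(a + P), g u := by
    intro g hg hgc
    rw [intervalIntegral.integral_add_adjacent_intervals (hgc.intervalIntegrable _ _)
      (hgc.intervalIntegrable _ _), hg.intervalIntegral_add_eq a 0, zero_add]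
  have hhalf' : ∫ u in b..(a + P), v u = (∫ u in 0..P, v u) / 2 := by
    linarith [hsplit v hvp hv]
  have hfc := hf.continuous
  have := hf.continuous_deriv_one
  have hgd : deriv (fun u => f u - f a) = deriv f := deriv_sub_const_fun _
  have hg : ContDiff ℝ 1 fun u => f u - f a := hf.sub contDiff_const
  have h₁ := pi_sq_mul_integral_sq_le_of_eq_zero hab hg hv hpos (by simp) (by simp [hfab])
  have h₂ := pi_sq_mul_integral_sq_le_of_eq_zero hba hg hv hpos (by simp [hfab]) (by simp [hfp a])
  rw [hgd, hhalf] at h₁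
  rw [hgd, hhalf'] at h₂
  have hmass := hsplit (fun u => (f u - f a) ^ 2 * v u) (fun u => by simp [hfp u, hvp u])
    (by fun_prop)
  rw [hsplit (fun u => deriv f u ^ 2 / v u) (fun u => by simp [periodic_deriv hfp u, hvp u])
    (.div (by fun_prop) hv fun u => (hpos u).ne')]
  have hvar := mul_le_mul_of_nonneg_left (integral_sq_le_integral_sub_sq_of_integral_eq_zero hP.le
    hfc hv (fun u => (hpos u).le) hmean (f a)) (by positivity : 0 ≤ 4 * π ^ 2)
  rw [hmass] at hvar
  linarith

theorem two_mul_integral_le_integral_sq_of_integral_cos_eq_zero (hab : a ≤ b) (hf : Continuous f)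
    (hv : Continuous v) (hnonneg : ∀ u, 0 ≤ v u) (hcos : ∫ u in a..b, cos (f u) * v u = 0) :
    2 * ∫ u in a..b, v u ≤ ∫ u in a..b, f u ^ 2 * v u := by
  have hle : ∫ u in a..b, (2 * v u - 2 * (cos (f u) * v u)) ≤ ∫ u in a..b, f u ^ 2 * v u := by
    refine intervalIntegral.integral_mono_on hab (Continuous.intervalIntegrable (by fun_prop) _ _)
      (Continuous.intervalIntegrable (by fun_prop) _ _) fun u _ => ?_
    linarith [mul_le_mul_of_nonneg_right (one_sub_sq_div_two_le_cos (x := f u)) (hnonneg u)]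
  rwa [intervalIntegral.integral_sub (Continuous.intervalIntegrable (by fun_prop) _ _)
    (Continuous.intervalIntegrable (by fun_prop) _ _), intervalIntegral.integral_const_mul,
    intervalIntegral.integral_const_mul, hcos, mul_zero, sub_zero] at hle

theorem exists_integral_sub_mul_eq_zero (hf : Continuous f) (hv : Continuous v)
    (htotal : ∫ u in a..b, v u ≠ 0) : ∃ m, ∫ u in a..b, (f u - m) * v u = 0 := by
  refine ⟨(∫ u in a..b, f u * v u) / ∫ u in a..b, v u, ?_⟩
  simp_rw [sub_mul]
  rw [intervalIntegral.integral_sub (Continuous.intervalIntegrable (by fun_prop) _ _)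
    (Continuous.intervalIntegrable (by fun_prop) _ _), intervalIntegral.integral_const_mul,
    div_mul_cancel₀ _ htotal, sub_self]

end WeightedInequalities

section RegularCurve

variable {n : WithTop ℕ∞} {c F V : ℝ → ℝ × ℝ} {f g : ℝ → ℝ} {P : ℝ}

theorem speed_sq (c : ℝ → ℝ × ℝ) (u : ℝ) :
    speed c u ^ 2 = (deriv c u).1 ^ 2 + (deriv c u).2 ^ 2 :=
  Real.sq_sqrt (by positivity)

theorem speed_pos {u : ℝ} (hu : deriv c u ≠ 0) : 0 < speed c u := by
  refine (Real.sqrt_nonneg _).lt_of_ne' fun h : speed c u = 0 => hu ?_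
  have hsq := speed_sq c u
  rw [h] at hsq
  exact Prod.ext (by simpa using (by nlinarith : (deriv c u).1 ^ 2 = 0))
    (by simpa using (by nlinarith : (deriv c u).2 ^ 2 = 0))

theorem contDiff_speed (hc : ContDiff ℝ (n + 1) c) (hreg : ∀ u, deriv c u ≠ 0) :
    ContDiff ℝ n (speed c) :=
  ((hc.deriv'.fst.pow 2).add (hc.deriv'.snd.pow 2)).sqrt fun u =>
    speed_sq c u ▸ (pow_pos (speed_pos (hreg u)) 2).ne'

theorem contDiff_arcD (hc : ContDiff ℝ (n + 1) c) (hreg : ∀ u, deriv c u ≠ 0)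
    (hf : ContDiff ℝ (n + 1) f) : ContDiff ℝ n (arcD c f) :=
  ((contDiff_speed hc hreg).inv fun u => (speed_pos (hreg u)).ne').mul hf.deriv'

theorem contDiff_arcDV (hc : ContDiff ℝ (n + 1) c) (hreg : ∀ u, deriv c u ≠ 0)
    (hF : ContDiff ℝ (n + 1) F) : ContDiff ℝ n (arcDV c F) :=
  ((contDiff_speed hc hreg).inv fun u => (speed_pos (hreg u)).ne').smul hF.deriv'

theorem contDiff_nuG (hc : ContDiff ℝ (n + 1) c) (hreg : ∀ u, deriv c u ≠ 0) :
    ContDiff ℝ n (nuG c) := by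
  have hs := contDiff_speed hc hreg
  exact (hc.deriv'.snd.div hs fun u => (speed_pos (hreg u)).ne').prodMk
    (hc.deriv'.fst.neg.div hs fun u => (speed_pos (hreg u)).ne')

theorem contDiff_curvG (hc : ContDiff ℝ (n + 1 + 1) c) (hreg : ∀ u, deriv c u ≠ 0) :
    ContDiff ℝ n (curvG c) := by
  have hc' := hc.of_le (le_self_add (a := n + 1))
  have hacc := contDiff_arcDV hc' hreg (contDiff_arcDV hc hreg hc)
  have hν := contDiff_nuG hc' hreg
  exact (hacc.fst.mul hν.fst).add (hacc.snd.mul hν.snd)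

theorem contDiff_curvGS (hc : ContDiff ℝ (n + 1 + 1 + 1) c) (hreg : ∀ u, deriv c u ≠ 0) :
    ContDiff ℝ n (curvGS c) :=
  contDiff_arcD (hc.of_le (le_self_add.trans le_self_add)) hreg (contDiff_curvG hc hreg)

theorem periodic_speed (hc : c.Periodic P) : (speed c).Periodic P := fun u => by
  simp only [speed, periodic_deriv hc u]

theorem periodic_arcD (hc : c.Periodic P) (hf : f.Periodic P) : (arcD c f).Periodic P :=
  fun u => by simp only [arcD, periodic_deriv hf u, periodic_speed hc u]

theorem periodic_arcDV (hc : c.Periodic P) (hF : F.Periodic P) : (arcDV c F).Periodic P :=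
  fun u => by simp only [arcDV, periodic_deriv hF u, periodic_speed hc u]

theorem periodic_curvG (hc : c.Periodic P) : (curvG c).Periodic P := fun u => by
  simp only [curvG, nuG, periodic_arcDV hc (periodic_arcDV hc hc) u, periodic_deriv hc u,
    periodic_speed hc u]

theorem arcD_mul_speed {u : ℝ} (hu : deriv c u ≠ 0) : arcD c f u * speed c u = deriv f u := by
  rw [arcD, mul_right_comm, inv_mul_cancel₀ (speed_pos hu).ne', one_mul]

theorem speed_smul_arcDV {u : ℝ} (hu : deriv c u ≠ 0) : speed c u • arcDV c F u = deriv F u := by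
  rw [arcDV, smul_inv_smul₀ (speed_pos hu).ne']

theorem nuG_eq_arcDV (c : ℝ → ℝ × ℝ) (u : ℝ) :
    nuG c u = ((arcDV c c u).2, -(arcDV c c u).1) := by
  simp only [nuG, arcDV, Prod.smul_fst, Prod.smul_snd, smul_eq_mul, div_eq_inv_mul, mul_neg]

theorem arcDV_self_sq {u : ℝ} (hu : deriv c u ≠ 0) :
    (arcDV c c u).1 ^ 2 + (arcDV c c u).2 ^ 2 = 1 := by
  have hs := (speed_pos hu).ne'
  simp only [arcDV, Prod.smul_fst, Prod.smul_snd, smul_eq_mul, mul_pow, ← mul_add, ← speed_sq]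
  field_simp

theorem innerP_arcDV_arcDV_self (hc : ContDiff ℝ 2 c) (hreg : ∀ u, deriv c u ≠ 0) (u : ℝ) :
    innerP (arcDV c c u) (arcDV c (arcDV c c) u) = 0 := by
  have hd := ((contDiff_arcDV (n := 1) hc hreg hc).differentiable (by simp) u).hasDerivAt
  have hsq := ((hasDerivAt_fst_comp hd).pow 2).add ((hasDerivAt_snd_comp hd).pow 2)
  have hconst := hsq.unique ((hasDerivAt_const u (1 : ℝ)).congr_of_eventuallyEq
    (.of_forall fun w => arcDV_self_sq (hreg w)))
  simp only [innerP, arcDV, Prod.smul_fst, Prod.smul_snd, smul_eq_mul] at hconst ⊢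
  norm_num at hconst
  linear_combination (speed c u)⁻¹ / 2 * hconst

theorem arcDV_arcDV_self (hc : ContDiff ℝ 2 c) (hreg : ∀ u, deriv c u ≠ 0) (u : ℝ) :
    arcDV c (arcDV c c) u = curvG c u • nuG c u := by
  have horth := innerP_arcDV_arcDV_self hc hreg u
  have hunit := arcDV_self_sq (hreg u)
  simp only [curvG, innerP, nuG_eq_arcDV] at horth ⊢
  ext <;> simp only [Prod.smul_fst, Prod.smul_snd, smul_eq_mul]
  · linear_combination (arcDV c c u).1 * horth - (arcDV c (arcDV c c) u).1 * hunit
  · linear_combination (arcDV c c u).2 * horth - (arcDV c (arcDV c c) u).2 * hunit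

theorem deriv_arcDV_self (hc : ContDiff ℝ 2 c) (hreg : ∀ u, deriv c u ≠ 0) (u : ℝ) :
    deriv (arcDV c c) u = (curvG c u * speed c u) • nuG c u := by
  rw [← speed_smul_arcDV (hreg u), arcDV_arcDV_self hc hreg, smul_smul, mul_comm]

theorem exists_eq_cos_and_eq_sin {p q : ℝ} (h : p ^ 2 + q ^ 2 = 1) :
    ∃ α, p = cos α ∧ q = sin α := by
  have hnorm : ‖(⟨p, q⟩ : ℂ)‖ = 1 := by rw [Complex.norm_eq_sqrt_sq_add_sq, h, Real.sqrt_one]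
  refine ⟨Complex.arg ⟨p, q⟩, ?_, ?_⟩
  · simpa [hnorm] using (Complex.norm_mul_cos_arg ⟨p, q⟩).symm
  · simpa [hnorm] using (Complex.norm_mul_sin_arg ⟨p, q⟩).symm

-- The minus sign comes from the convention `ν = (y', -x') / |γ'|`, the tangent turned clockwise.
theorem exists_tangentAngle (hc : ContDiff ℝ 2 c) (hreg : ∀ u, deriv c u ≠ 0) :
    ∃ φ : ℝ → ℝ, (∀ u, HasDerivAt φ (-(curvG c u * speed c u)) u) ∧
      ∀ u, arcDV c c u = (cos (φ u), sin (φ u)) := by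
  have hκv : Continuous fun u => curvG c u * speed c u :=
    (contDiff_curvG (n := 0) (by simpa [one_add_one_eq_two] using hc) hreg).continuous.mul
      (contDiff_speed (n := 1) hc hreg).continuous
  have hτ : ContDiff ℝ 1 (arcDV c c) := contDiff_arcDV hc hreg hc
  set p : ℝ → ℝ := fun u => (arcDV c c u).1
  set q : ℝ → ℝ := fun u => (arcDV c c u).2
  have hunit : ∀ u, p u ^ 2 + q u ^ 2 = 1 := fun u => arcDV_self_sq (hreg u)
  have hτd : ∀ u, HasDerivAt (arcDV c c) ((curvG c u * speed c u) • nuG c u) u := fun u =>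
    deriv_arcDV_self hc hreg u ▸ (hτ.differentiable (by simp) u).hasDerivAt
  obtain ⟨α, hcosα, hsinα⟩ := exists_eq_cos_and_eq_sin (hunit 0)
  set φ : ℝ → ℝ := fun u => α - ∫ w in 0..u, curvG c w * speed c w with hφ
  have hφd : ∀ u, HasDerivAt φ (-(curvG c u * speed c u)) u := fun u =>
    (hκv.integral_hasStrictDerivAt 0 u).hasDerivAt.const_sub _
  have hd : ∀ u, HasDerivAt (fun u => p u * cos (φ u) + q u * sin (φ u)) 0 u := fun u => by
    convert! ((hasDerivAt_fst_comp (hτd u)).mul (hφd u).cos).add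
      ((hasDerivAt_snd_comp (hτd u)).mul (hφd u).sin) using 1
    simp only [nuG_eq_arcDV, Prod.smul_fst, Prod.smul_snd, smul_eq_mul]
    ring
  have hconst : ∀ u, p u * cos (φ u) + q u * sin (φ u) = 1 := fun u => by
    rw [is_const_of_deriv_eq_zero (fun w => (hd w).differentiableAt) (fun w => (hd w).deriv) u 0,
      hcosα, hsinα]
    simp [hφ, ← sq]
  have hdist : ∀ u, (p u - cos (φ u)) ^ 2 + (q u - sin (φ u)) ^ 2 = 0 := fun u => by
    linear_combination hunit u + sin_sq_add_cos_sq (φ u) - 2 * hconst u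
  refine ⟨φ, hφd, fun u => Prod.ext ?_ ?_⟩
  · nlinarith [hdist u, sq_nonneg (q u - sin (φ u))]
  · nlinarith [hdist u, sq_nonneg (p u - cos (φ u))]

theorem integral_cos_tangentAngle_sub {φ : ℝ → ℝ} (hc : ContDiff ℝ 1 c)
    (hreg : ∀ u, deriv c u ≠ 0) (hper : c.Periodic P)
    (hφ : ∀ u, arcDV c c u = (cos (φ u), sin (φ u))) (m : ℝ) :
    ∫ u in 0..P, cos (φ u - m) * speed c u = 0 := by
  have hd : ∀ u, deriv (fun u => cos m * (c u).1 + sin m * (c u).2) u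
      = cos (φ u - m) * speed c u := by
    intro u
    have hcu := (hc.differentiable (by simp) u).hasDerivAt
    rw [← speed_smul_arcDV (hreg u), hφ] at hcu
    rw [(((hasDerivAt_fst_comp hcu).const_mul (cos m)).fun_add
      ((hasDerivAt_snd_comp hcu).const_mul (sin m))).deriv, cos_sub]
    simp only [Prod.smul_fst, Prod.smul_snd, smul_eq_mul]
    ring
  simp_rw [← hd]
  exact integral_deriv_eq_zero_of_periodic ((contDiff_const.mul hc.fst).add
    (contDiff_const.mul hc.snd)) fun u => by rw [hper u]

theorem integral_speed_pos (hP : 0 < P) (hc : ContDiff ℝ 1 c) (hreg : ∀ u, deriv c u ≠ 0) :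
    0 < ∫ u in 0..P, speed c u :=
  intervalIntegral.intervalIntegral_pos_of_pos
    ((contDiff_speed (n := 0) (by simpa using hc) hreg).continuous.intervalIntegrable _ _)
    (fun u => speed_pos (hreg u)) hP

theorem four_mul_pi_sq_mul_integral_sq_le_integral_arcD_sq (hP : 0 < P) (hc : ContDiff ℝ 1 c)
    (hreg : ∀ u, deriv c u ≠ 0) (hper : c.Periodic P) (hf : ContDiff ℝ 1 f) (hfp : f.Periodic P)
    (hmean : ∫ u in 0..P, f u * speed c u = 0) :
    4 * π ^ 2 * ∫ u in 0..P, f u ^ 2 * speed c u ≤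
      (∫ u in 0..P, speed c u) ^ 2 * ∫ u in 0..P, arcD c f u ^ 2 * speed c u := by
  have henergy : ∀ u, arcD c f u ^ 2 * speed c u = deriv f u ^ 2 / speed c u := fun u => by
    have hs := (speed_pos (hreg u)).ne'
    rw [← arcD_mul_speed (hreg u)]
    field_simp
  simp_rw [henergy]
  exact four_mul_pi_sq_mul_integral_sq_le hP hf
    (contDiff_speed (n := 0) (by simpa using hc) hreg).continuous (fun u => speed_pos (hreg u))
    hfp (periodic_speed hper) hmean

theorem eight_mul_pi_sq_le_length_mul_integral_curvG_sq (hP : 0 < P) (hc : ContDiff ℝ 2 c)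
    (hreg : ∀ u, deriv c u ≠ 0) (hper : c.Periodic P)
    (hwind : ∫ u in 0..P, curvG c u * speed c u = 0) :
    8 * π ^ 2 ≤ (∫ u in 0..P, speed c u) * ∫ u in 0..P, curvG c u ^ 2 * speed c u := by
  have hc₁ : ContDiff ℝ 1 c := hc.of_le one_le_two
  have hv : Continuous (speed c) := (contDiff_speed (n := 1) hc hreg).continuous
  have hκ : Continuous (curvG c) :=
    (contDiff_curvG (n := 0) (by simpa [one_add_one_eq_two] using hc) hreg).continuous
  obtain ⟨φ, hφd, hφ⟩ := exists_tangentAngle hc hreg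
  have hφ' : deriv φ = fun u => -(curvG c u * speed c u) := funext fun u => (hφd u).deriv
  have hφ₁ : ContDiff ℝ 1 φ :=
    contDiff_one_iff_deriv.2 ⟨fun u => (hφd u).differentiableAt, by rw [hφ']; fun_prop⟩
  have hφp : φ.Periodic P := by
    refine periodic_of_integral_deriv_eq_zero hφ₁ ?_ ?_
    · exact hφ' ▸ fun u => by simp only [periodic_curvG hper u, periodic_speed hper u]
    · rw [hφ', intervalIntegral.integral_neg, hwind, neg_zero]
  set L := ∫ u in 0..P, speed c u
  have hLpos : 0 < L := integral_speed_pos hP hc₁ hreg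
  obtain ⟨m, hmean⟩ := exists_integral_sub_mul_eq_zero hφ₁.continuous hv hLpos.ne'
  have hf₁ : ContDiff ℝ 1 fun u => φ u - m := hφ₁.sub contDiff_const
  have hlower := two_mul_integral_le_integral_sq_of_integral_cos_eq_zero hP.le hf₁.continuous hv
    (fun u => (speed_pos (hreg u)).le) (integral_cos_tangentAngle_sub hc₁ hreg hper hφ m)
  have hκ_eq : ∀ u, arcD c (fun u => φ u - m) u = -curvG c u := fun u => by
    rw [arcD, deriv_sub_const, (hφd u).deriv, ← neg_mul, mul_comm,
      mul_inv_cancel_right₀ (speed_pos (hreg u)).ne']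
  have hupper := four_mul_pi_sq_mul_integral_sq_le_integral_arcD_sq hP hc₁ hreg hper hf₁
    (fun u => by rw [hφp u]) hmean
  simp_rw [hκ_eq, neg_sq] at hupper
  refine le_of_mul_le_mul_left ?_ hLpos
  linarith [mul_le_mul_of_nonneg_left hlower (by positivity : 0 ≤ 4 * π ^ 2)]

theorem thirty_two_mul_pi_pow_four_le_length_pow_mul_integral_curvGS_sq (hP : 0 < P)
    (hc : ContDiff ℝ 3 c) (hreg : ∀ u, deriv c u ≠ 0) (hper : c.Periodic P)
    (hwind : ∫ u in 0..P, curvG c u * speed c u = 0) :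
    32 * π ^ 4 ≤ (∫ u in 0..P, speed c u) ^ 3 * ∫ u in 0..P, curvGS c u ^ 2 * speed c u := by
  have hc₁ : ContDiff ℝ 1 c := hc.of_le (by norm_num)
  have hκ : ContDiff ℝ 1 (curvG c) :=
    contDiff_curvG (by simpa [one_add_one_eq_two, two_add_one_eq_three] using hc) hreg
  have hL := (integral_speed_pos hP hc₁ hreg).le
  have hbending := eight_mul_pi_sq_le_length_mul_integral_curvG_sq hP (hc.of_le (by norm_num))
    hreg hper hwind
  have hwirtinger := four_mul_pi_sq_mul_integral_sq_le_integral_arcD_sq hP hc₁ hreg hper hκ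
    (periodic_curvG hper) hwind
  change _ ≤ _ * ∫ u in 0..P, curvGS c u ^ 2 * speed c u at hwirtinger
  set L := ∫ u in 0..P, speed c u
  calc 32 * π ^ 4 = 4 * π ^ 2 * (8 * π ^ 2) := by ring
    _ ≤ 4 * π ^ 2 * (L * ∫ u in 0..P, curvG c u ^ 2 * speed c u) := by gcongr
    _ = L * (4 * π ^ 2 * ∫ u in 0..P, curvG c u ^ 2 * speed c u) := by ring
    _ ≤ L * (L ^ 2 * ∫ u in 0..P, curvGS c u ^ 2 * speed c u) := by gcongr
    _ = L ^ 3 * ∫ u in 0..P, curvGS c u ^ 2 * speed c u := by ring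

theorem integral_mul_arcD (hreg : ∀ u, deriv c u ≠ 0) (hf : ContDiff ℝ 1 f) (hg : ContDiff ℝ 1 g)
    (hfp : f.Periodic P) (hgp : g.Periodic P) :
    ∫ u in 0..P, f u * arcD c g u * speed c u = -∫ u in 0..P, arcD c f u * g u * speed c u := by
  simp_rw [mul_right_comm _ (g _), mul_assoc (f _), arcD_mul_speed (hreg _)]
  exact integral_mul_deriv_eq_neg_of_periodic hf hg hfp hgp

theorem integral_curvG_mul_curvGSS (hc : ContDiff ℝ 4 c) (hreg : ∀ u, deriv c u ≠ 0)
    (hper : c.Periodic P) :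
    ∫ u in 0..P, curvG c u * curvGSS c u * speed c u
      = -∫ u in 0..P, curvGS c u ^ 2 * speed c u := by
  have hκ : ContDiff ℝ 1 (curvG c) := contDiff_curvG (hc.of_le (by norm_num)) hreg
  have hκs : ContDiff ℝ 1 (curvGS c) := contDiff_curvGS (hc.of_le (by norm_num)) hreg
  simp_rw [sq]
  exact integral_mul_arcD hreg hκ hκs (periodic_curvG hper)
    (periodic_arcD hper (periodic_curvG hper))

theorem integral_innerP_arcDV_deriv (hc : ContDiff ℝ 2 c) (hreg : ∀ u, deriv c u ≠ 0)
    (hper : c.Periodic P) (hV : ContDiff ℝ 1 V) (hVp : V.Periodic P) :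
    ∫ u in 0..P, innerP (arcDV c c u) (deriv V u)
      = -∫ u in 0..P, curvG c u * innerP (V u) (nuG c u) * speed c u := by
  have hτ : ContDiff ℝ 1 (arcDV c c) := contDiff_arcDV hc hreg hc
  rw [integral_innerP_deriv_eq_neg_of_periodic hτ hV (periodic_arcDV hper hper) hVp]
  congr 2 with u
  rw [deriv_arcDV_self hc hreg]
  simp only [innerP, Prod.smul_fst, Prod.smul_snd, smul_eq_mul]
  ring

end RegularCurve

section MixedPartials

variable {E : Type*} [NormedAddCommGroup E] [NormedSpace ℝ E] {F : ℝ × ℝ → E}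
  {F' : ℝ × ℝ →L[ℝ] E} {u t : ℝ}

theorem hasDerivAt_partial_fst (h : HasFDerivAt F F' (u, t)) :
    HasDerivAt (fun u => F (u, t)) (F' (1, 0)) u :=
  h.comp_hasDerivAt u ((hasDerivAt_id u).prodMk (hasDerivAt_const u t))

theorem hasDerivAt_partial_snd (h : HasFDerivAt F F' (u, t)) :
    HasDerivAt (fun t => F (u, t)) (F' (0, 1)) t :=
  h.comp_hasDerivAt t ((hasDerivAt_const t u).prodMk (hasDerivAt_id t))

theorem eventually_hasFDerivAt {n : WithTop ℕ∞} {z : ℝ × ℝ} (hF : ContDiffAt ℝ n F z)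
    (hn : 1 ≤ n) : ∀ᶠ w in nhds z, HasFDerivAt F (fderiv ℝ F w) w :=
  ((hF.of_le hn).eventually (by simp)).mono fun _ hw => (hw.differentiableAt (by simp)).hasFDerivAt

theorem hasFDerivAt_fderiv (hF : ContDiffAt ℝ 2 F (u, t)) :
    HasFDerivAt (fderiv ℝ F) (fderiv ℝ (fderiv ℝ F) (u, t)) (u, t) :=
  ((hF.fderiv_right (m := 1) (by norm_num)).differentiableAt (by simp)).hasFDerivAt

theorem hasDerivAt_deriv_fst (hF : ContDiffAt ℝ 2 F (u, t)) :
    HasDerivAt (fun t => deriv (fun u => F (u, t)) u)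
      (fderiv ℝ (fderiv ℝ F) (u, t) (0, 1) (1, 0)) t := by
  have hd := (hasDerivAt_partial_snd (hasFDerivAt_fderiv hF)).clm_apply
    (hasDerivAt_const t ((1 : ℝ), (0 : ℝ)))
  simp only [map_zero, add_zero] at hd
  have hslice : Tendsto (fun x => (u, x)) (nhds t) (nhds (u, t)) :=
    Continuous.tendsto (by fun_prop) t
  exact hd.congr_of_eventuallyEq <| (hslice.eventually (eventually_hasFDerivAt hF one_le_two)).mono
    fun _ hx => (hasDerivAt_partial_fst hx).deriv

theorem hasDerivAt_deriv_snd (hF : ContDiffAt ℝ 2 F (u, t)) :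
    HasDerivAt (fun u => deriv (fun t => F (u, t)) t)
      (fderiv ℝ (fderiv ℝ F) (u, t) (0, 1) (1, 0)) u := by
  have hd := (hasDerivAt_partial_fst (hasFDerivAt_fderiv hF)).clm_apply
    (hasDerivAt_const u ((0 : ℝ), (1 : ℝ)))
  simp only [map_zero, add_zero] at hd
  rw [(hF.isSymmSndFDerivAt (by simp)).eq (1, 0) (0, 1)] at hd
  have hslice : Tendsto (fun x => (x, t)) (nhds u) (nhds (u, t)) :=
    Continuous.tendsto (by fun_prop) u
  exact hd.congr_of_eventuallyEq <| (hslice.eventually (eventually_hasFDerivAt hF one_le_two)).mono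
    fun _ hx => (hasDerivAt_partial_snd hx).deriv

end MixedPartials

section CurveFamily

variable {E : Type*} [NormedAddCommGroup E] [NormedSpace ℝ E] {n : WithTop ℕ∞} {I : Set ℝ} {t : ℝ}

theorem contDiff_slice {γ : ℝ → ℝ → E}
    (hγ : ContDiffOn ℝ n (fun p : ℝ × ℝ => γ p.1 p.2) (Set.univ ×ˢ I)) (ht : t ∈ I) :
    ContDiff ℝ n fun u => γ u t :=
  hγ.comp_contDiff (f := fun u : ℝ => (u, t)) (by fun_prop) fun _ => ⟨Set.mem_univ _, ht⟩

theorem continuousOn_deriv_slice {γ : ℝ → ℝ → E}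
    (hγ : ContDiffOn ℝ 1 (fun p : ℝ × ℝ => γ p.1 p.2) (Set.univ ×ˢ I))
    (hI : UniqueDiffOn ℝ I) :
    ContinuousOn (fun z : ℝ × ℝ => deriv (fun u => γ u z.2) z.1) (Set.univ ×ˢ I) := by
  refine ((hγ.continuousOn_fderivWithin (uniqueDiffOn_univ.prod hI) (by simp)).clm_apply
    (continuousOn_const (c := ((1 : ℝ), (0 : ℝ))))).congr fun z hz => ?_
  have hline : HasDerivWithinAt (fun u : ℝ => (u, z.2)) ((1 : ℝ), (0 : ℝ)) Set.univ z.1 :=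
    ((hasDerivAt_id z.1).prodMk (hasDerivAt_const z.1 z.2)).hasDerivWithinAt
  exact (((hγ.differentiableOn (by simp) z hz).hasFDerivWithinAt.comp_hasDerivWithinAt z.1 hline
    fun _ _ => Set.mk_mem_prod (Set.mem_univ _) hz.2).hasDerivAt univ_mem).deriv

theorem contDiff_deriv_snd {γ : ℝ → ℝ → E} (hI : IsOpen I)
    (hγ : ContDiffOn ℝ (n + 1) (fun p : ℝ × ℝ => γ p.1 p.2) (Set.univ ×ˢ I)) (ht : t ∈ I) :
    ContDiff ℝ n fun u => deriv (fun t' => γ u t') t := by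
  have hopen : IsOpen ((Set.univ : Set ℝ) ×ˢ I) := isOpen_univ.prod hI
  have hd : ∀ u, deriv (fun t' => γ u t') t
      = fderiv ℝ (fun p : ℝ × ℝ => γ p.1 p.2) (u, t) (0, 1) := fun u =>
    (hasDerivAt_partial_snd ((hγ.contDiffAt (hopen.mem_nhds (Set.mk_mem_prod (Set.mem_univ u) ht)))
      |>.differentiableAt (by simp)).hasFDerivAt).deriv
  simp_rw [hd]
  exact ((hγ.fderiv_of_isOpen hopen le_rfl).comp_contDiff (f := fun u : ℝ => (u, t)) (by fun_prop)
    fun _ => ⟨Set.mem_univ _, ht⟩).clm_apply contDiff_const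

theorem hasDerivAt_intervalIntegral_of_continuousOn {a b : ℝ} (hI : I ∈ nhds t) {g g' : ℝ → ℝ → ℝ}
    (hg : ∀ x ∈ I, Continuous fun u => g u x)
    (hg' : ContinuousOn (fun z : ℝ × ℝ => g' z.1 z.2) (Set.univ ×ˢ I))
    (hd : ∀ u, ∀ x ∈ I, HasDerivAt (fun x => g u x) (g' u x) x) :
    HasDerivAt (fun x => ∫ u in a..b, g u x) (∫ u in a..b, g' u t) t := by
  obtain ⟨ε, hε, hball⟩ := Metric.nhds_basis_closedBall.mem_iff.1 hI
  obtain ⟨C, hC⟩ := (isCompact_uIcc (a := a) (b := b)).prod (isCompact_closedBall t ε)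
    |>.exists_bound_of_continuousOn (hg'.mono (Set.prod_mono (Set.subset_univ _) hball))
  have ht : t ∈ I := mem_of_mem_nhds hI
  have hg't : Continuous fun u => g' u t :=
    hg'.comp_continuous (f := fun u : ℝ => (u, t)) (by fun_prop) fun _ => ⟨Set.mem_univ _, ht⟩
  refine (intervalIntegral.hasDerivAt_integral_of_dominated_loc_of_deriv_le
    (F := fun x u => g u x) (F' := fun x u => g' u x) (bound := fun _ => C)
    (Metric.closedBall_mem_nhds t hε) ?_ ((hg t ht).intervalIntegrable _ _)
    hg't.aestronglyMeasurable ?_ (by simp) ?_).2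
  · filter_upwards [hI] with x hx using (hg x hx).aestronglyMeasurable
  · exact .of_forall fun u hu x hx => hC (u, x) ⟨Set.uIoc_subset_uIcc hu, hx⟩
  · exact .of_forall fun u _ x hx => hd u x (hball hx)

variable {γ : ℝ → ℝ → ℝ × ℝ}

theorem continuousOn_clen (hγ : ContDiffOn ℝ 1 (fun p : ℝ × ℝ => γ p.1 p.2) (Set.univ ×ˢ I))
    (hI : UniqueDiffOn ℝ I) : ContinuousOn (clen γ) I := by
  rw [continuousOn_iff_continuous_domRestrict]
  have hγ' : Continuous fun z : I × ℝ => deriv (fun u => γ u z.1) z.2 :=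
    (continuousOn_deriv_slice hγ hI).comp_continuous (f := fun z : I × ℝ => (z.2, (z.1 : ℝ)))
      (by fun_prop) fun z => ⟨Set.mem_univ _, z.1.2⟩
  exact intervalIntegral.continuous_parametric_intervalIntegral_of_continuous'
    (f := fun (t : I) u => speed (fun u' => γ u' t) u)
    ((hγ'.fst.pow 2).add (hγ'.snd.pow 2)).sqrt 0 (2 * π)

theorem hasDerivAt_speed {u : ℝ} {w : ℝ × ℝ} (hreg : deriv (fun u' => γ u' t) u ≠ 0)
    (hw : HasDerivAt (fun t' => deriv (fun u' => γ u' t') u) w t) :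
    HasDerivAt (fun t' => speed (fun u' => γ u' t') u)
      (innerP (arcDV (fun u' => γ u' t) (fun u' => γ u' t) u) w) t := by
  have hs := speed_pos hreg
  have hne : (deriv (fun u' => γ u' t) u).1 ^ 2 + (deriv (fun u' => γ u' t) u).2 ^ 2 ≠ 0 := by
    rw [← speed_sq]
    positivity
  convert! (((hasDerivAt_fst_comp hw).fun_pow 2).add ((hasDerivAt_snd_comp hw).fun_pow 2)).sqrt hne
    using 1
  change _ = _ / (2 * speed (fun u' => γ u' t) u)
  simp only [innerP, arcDV, Prod.smul_fst, Prod.smul_snd, smul_eq_mul]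
  field_simp
  norm_num
  ring

theorem hasDerivAt_clen (hI : IsOpen I)
    (hγ : ContDiffOn ℝ 2 (fun p : ℝ × ℝ => γ p.1 p.2) (Set.univ ×ˢ I))
    (hreg : ∀ u, ∀ t ∈ I, deriv (fun u' => γ u' t) u ≠ 0) (ht : t ∈ I) :
    HasDerivAt (clen γ) (∫ u in 0..(2 * π), innerP (arcDV (fun u' => γ u' t) (fun u' => γ u' t) u)
      (deriv (fun u' => deriv (fun t' => γ u' t') t) u)) t := by
  set F : ℝ × ℝ → ℝ × ℝ := fun p => γ p.1 p.2
  have hopen : IsOpen ((Set.univ : Set ℝ) ×ˢ I) := isOpen_univ.prod hI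
  have hF : ∀ u, ∀ x ∈ I, ContDiffAt ℝ 2 F (u, x) := fun u x hx =>
    hγ.contDiffAt (hopen.mem_nhds (Set.mk_mem_prod (Set.mem_univ u) hx))
  have hmixed : ContinuousOn (fun z : ℝ × ℝ => fderiv ℝ (fderiv ℝ F) z (0, 1) (1, 0))
      (Set.univ ×ˢ I) :=
    ((((hγ.fderiv_of_isOpen (m := 1) hopen (by norm_num)).fderiv_of_isOpen (m := 0) hopen
      (by norm_num)).continuousOn).clm_apply continuousOn_const).clm_apply continuousOn_const
  have hγ' := continuousOn_deriv_slice (hγ.of_le one_le_two) hI.uniqueDiffOn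
  have hspeed : ContinuousOn (fun z : ℝ × ℝ => speed (fun u' => γ u' z.2) z.1) (Set.univ ×ˢ I) :=
    ((hγ'.fst.pow 2).add (hγ'.snd.pow 2)).sqrt
  have hτ : ContinuousOn (fun z : ℝ × ℝ => arcDV (fun u' => γ u' z.2) (fun u' => γ u' z.2) z.1)
      (Set.univ ×ˢ I) :=
    (hspeed.inv₀ fun z hz => (speed_pos (hreg z.1 z.2 hz.2)).ne').smul hγ'
  have hd := hasDerivAt_intervalIntegral_of_continuousOn (a := 0) (b := 2 * π) (hI.mem_nhds ht)
    (fun x hx => (contDiff_speed (n := 1) (contDiff_slice hγ hx) fun u => hreg u x hx).continuous)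
    ((hτ.fst.mul hmixed.fst).add (hτ.snd.mul hmixed.snd))
    fun u x hx => hasDerivAt_speed (hreg u x hx) (hasDerivAt_deriv_fst (hF u x hx))
  have hcomm : ∀ u, deriv (fun u' => deriv (fun t' => γ u' t') t) u
      = fderiv ℝ (fderiv ℝ F) (u, t) (0, 1) (1, 0) := fun u =>
    (hasDerivAt_deriv_snd (hF u t ht)).deriv
  simp_rw [hcomm]
  exact hd

theorem hasDerivAt_clen_of_periodic (hI : IsOpen I)
    (hγ : ContDiffOn ℝ 2 (fun p : ℝ × ℝ => γ p.1 p.2) (Set.univ ×ˢ I))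
    (hper : ∀ u, ∀ t ∈ I, γ (u + 2 * π) t = γ u t)
    (hreg : ∀ u, ∀ t ∈ I, deriv (fun u' => γ u' t) u ≠ 0) (ht : t ∈ I) :
    HasDerivAt (clen γ) (-∫ u in 0..(2 * π), curvG (fun u' => γ u' t) u *
      innerP (deriv (fun t' => γ u t') t) (nuG (fun u' => γ u' t) u) *
      speed (fun u' => γ u' t) u) t := by
  have hV : ContDiff ℝ 1 fun u => deriv (fun t' => γ u t') t := contDiff_deriv_snd hI hγ ht
  have hVp : (fun u => deriv (fun t' => γ u t') t).Periodic (2 * π) := fun u =>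
    EventuallyEq.deriv_eq (eventually_of_mem (hI.mem_nhds ht) fun x hx => hper u x hx)
  rw [← integral_innerP_arcDV_deriv (contDiff_slice hγ ht) (fun u => hreg u t ht)
    (fun u => hper u t ht) hV hVp]
  exact hasDerivAt_clen hI hγ hreg ht

theorem hasDerivAt_clen_of_flow (hI : IsOpen I)
    (hγ : ContDiffOn ℝ 4 (fun p : ℝ × ℝ => γ p.1 p.2) (Set.univ ×ˢ I))
    (hper : ∀ u, ∀ t ∈ I, γ (u + 2 * π) t = γ u t)
    (hreg : ∀ u, ∀ t ∈ I, deriv (fun u' => γ u' t) u ≠ 0) (ht : t ∈ I)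
    (hflow : ∀ u, innerP (deriv (fun t' => γ u t') t) (nuG (fun u' => γ u' t) u)
      = -curvGSS (fun u' => γ u' t) u) :
    HasDerivAt (clen γ)
      (-∫ u in 0..(2 * π), curvGS (fun u' => γ u' t) u ^ 2 * speed (fun u' => γ u' t) u) t := by
  rw [← integral_curvG_mul_curvGSS (contDiff_slice hγ ht) (fun u => hreg u t ht)
    fun u => hper u t ht]
  have hfirst := hasDerivAt_clen_of_periodic hI (hγ.of_le (by norm_num)) hper hreg ht
  simpa only [hflow, mul_neg, neg_mul, intervalIntegral.integral_neg, neg_neg] using hfirst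

end CurveFamily

section ImprovedTimeBound

variable {T : ℝ} {γ : ℝ → ℝ → ℝ × ℝ}

theorem clen_pow_four_le_of_flow
    (hsmooth : ContDiffOn ℝ 4 (fun p : ℝ × ℝ => γ p.1 p.2) (Set.univ ×ˢ Set.Ico 0 T))
    (hper : ∀ u, ∀ t ∈ Set.Ioo 0 T, γ (u + 2 * π) t = γ u t)
    (hreg : ∀ u, ∀ t ∈ Set.Ioo 0 T, deriv (fun u' => γ u' t) u ≠ 0)
    (hflow : ∀ u, ∀ t ∈ Set.Ioo 0 T,
      innerP (deriv (fun t' => γ u t') t) (nuG (fun u' => γ u' t) u)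
        = -curvGSS (fun u' => γ u' t) u)
    (hwind : ∀ t ∈ Set.Ioo 0 T,
      ∫ u in 0..(2 * π), curvG (fun u' => γ u' t) u * speed (fun u' => γ u' t) u = 0)
    {t : ℝ} (ht : t ∈ Set.Ico 0 T) : clen γ t ^ 4 ≤ clen γ 0 ^ 4 - 128 * π ^ 4 * t := by
  have hopen : ContDiffOn ℝ 4 (fun p : ℝ × ℝ => γ p.1 p.2) (Set.univ ×ˢ Set.Ioo 0 T) :=
    hsmooth.mono (Set.prod_mono_right Set.Ioo_subset_Ico_self)
  have hderiv : ∀ s ∈ Set.Ioo 0 T, HasDerivAt (fun s => clen γ s ^ 4) (4 * clen γ s ^ 3 *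
      -∫ u in 0..(2 * π), curvGS (fun u' => γ u' s) u ^ 2 * speed (fun u' => γ u' s) u) s :=
    fun s hs => (hasDerivAt_clen_of_flow isOpen_Ioo hopen hper hreg hs
      fun u => hflow u s hs).fun_pow 4
  have hbound : ∀ s ∈ Set.Ioo 0 T, deriv (fun s => clen γ s ^ 4) s ≤ -(128 * π ^ 4) := by
    intro s hs
    have hc : ContDiff ℝ 3 fun u => γ u s := (contDiff_slice hopen hs).of_le (by norm_num)
    have hdissipation := thirty_two_mul_pi_pow_four_le_length_pow_mul_integral_curvGS_sq
      two_pi_pos hc (fun u => hreg u s hs) (fun u => hper u s hs) (hwind s hs)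
    rw [(hderiv s hs).deriv, clen]
    linarith
  have hcont : ContinuousOn (fun s => clen γ s ^ 4) (Set.Ico 0 T) :=
    (continuousOn_clen (hsmooth.of_le (by norm_num)) (uniqueDiffOn_Ico 0 T)).pow 4
  rw [← interior_Ico] at hderiv hbound
  have hdecrease := (convex_Ico 0 T).image_sub_le_mul_sub_of_deriv_le hcont
    (fun s hs => (hderiv s hs).differentiableAt.differentiableWithinAt) hbound
    0 ⟨le_rfl, ht.1.trans_lt ht.2⟩ t ht ht.1
  linarith

theorem curve_diffusion_improved_time_bound_general
    (hsmooth : ContDiffOn ℝ 4 (fun p : ℝ × ℝ => γ p.1 p.2) (Set.univ ×ˢ Set.Ico 0 T))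
    (hper : ∀ u, ∀ t ∈ Set.Ioo 0 T, γ (u + 2 * π) t = γ u t)
    (hreg : ∀ u, ∀ t ∈ Set.Ioo 0 T, deriv (fun u' => γ u' t) u ≠ 0)
    (hflow : ∀ u, ∀ t ∈ Set.Ioo 0 T,
      innerP (deriv (fun t' => γ u t') t) (nuG (fun u' => γ u' t) u)
        = -curvGSS (fun u' => γ u' t) u)
    (hwind : ∀ t ∈ Set.Ioo 0 T,
      ∫ u in 0..(2 * π), curvG (fun u' => γ u' t) u * speed (fun u' => γ u' t) u = 0) :
    (∀ t ∈ Set.Ico 0 T, clen γ t ^ 4 ≤ clen γ 0 ^ 4 - 128 * π ^ 4 * t) ∧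
      T ≤ clen γ 0 ^ 4 / (128 * π ^ 4) := by
  have hlength : ∀ t ∈ Set.Ico 0 T, clen γ t ^ 4 ≤ clen γ 0 ^ 4 - 128 * π ^ 4 * t := fun t ht =>
    clen_pow_four_le_of_flow hsmooth hper hreg hflow hwind ht
  refine ⟨hlength, le_of_forall_lt_imp_le_of_dense fun t htT => ?_⟩
  rcases lt_or_ge t 0 with ht | ht
  · exact ht.le.trans (by positivity)
  · rw [le_div_iff₀' (by positivity)]
    linarith [hlength t ⟨ht, htT⟩, (Even.pow_nonneg (by decide) _ : 0 ≤ clen γ t ^ 4)]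

end ImprovedTimeBound

/-- improved bound: a curve diffusion flow of closed curves whose curves all
have winding number zero satisfies `L(t)⁴ ≤ L(0)⁴ − 768 π² t`, and hence `T ≤ L(0)⁴/(768 π²)`. -/
theorem curve_diffusion_improved_time_bound
    (T : ℝ) (hT : 0 < T) (γ : ℝ → ℝ → ℝ × ℝ)
    (hsmooth : ContDiffOn ℝ (⊤ : ℕ∞) (fun p : ℝ × ℝ => γ p.1 p.2) (Set.univ ×ˢ Set.Ico 0 T))
    (hper : ∀ u : ℝ, ∀ t ∈ Set.Ico (0:ℝ) T, γ (u + 2 * Real.pi) t = γ u t)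
    (hreg : ∀ u : ℝ, ∀ t ∈ Set.Ico (0:ℝ) T, deriv (fun u' => γ u' t) u ≠ 0)
    (hflow : ∀ u : ℝ, ∀ t ∈ Set.Ico (0:ℝ) T,
      innerP (deriv (fun t' => γ u t') t) (nuG (fun u' => γ u' t) u)
        = - curvGSS (fun u' => γ u' t) u)
    (hwind : ∀ t ∈ Set.Ico (0:ℝ) T,
      ∫ u in (0:ℝ)..(2 * Real.pi), curvG (fun u' => γ u' t) u * speed (fun u' => γ u' t) u = 0) :
    (∀ t ∈ Set.Ico (0:ℝ) T, (clen γ t) ^ 4 ≤ (clen γ 0) ^ 4 - 768 * Real.pi ^ 2 * t) ∧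
      T ≤ (clen γ 0) ^ 4 / (768 * Real.pi ^ 2) := by
  obtain ⟨hlength, htime⟩ := curve_diffusion_improved_time_bound_general
    (hsmooth.of_le ENat.LEInfty.out) (fun u t ht => hper u t (Set.Ioo_subset_Ico_self ht))
    (fun u t ht => hreg u t (Set.Ioo_subset_Ico_self ht))
    (fun u t ht => hflow u t (Set.Ioo_subset_Ico_self ht))
    fun t ht => hwind t (Set.Ioo_subset_Ico_self ht)
  have hπ_sq : 6 ≤ π ^ 2 := by nlinarith [pi_gt_three]
  have hπ : 768 * π ^ 2 ≤ 128 * π ^ 4 := by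
    linarith [mul_le_mul_of_nonneg_left hπ_sq (sq_nonneg π)]
  refine ⟨fun t ht => (hlength t ht).trans ?_, htime.trans ?_⟩
  · linarith [mul_le_mul_of_nonneg_right hπ ht.1]
  · exact div_le_div_of_nonneg_left (by positivity) (by positivity) hπ
end

section
/- Let γ : ℝ → ℝ² be a smooth closed regular plane curve parametrised by arc length with period L > 0, with curvature κ, and suppose κ''(s) = 0 for all s ∈ ℝ (γ is a stationary solution of the curve diffusion flow). Then γ is a round circle: there exist a point c ∈ ℝ² and a radius R > 0 such that ‖γ(s) − c‖ = R for all s ∈ ℝ. -/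
open Real MeasureTheory Filter

/-- Unit normal `ν = (y', -x')` of a plane curve parametrised by arc length. -/
noncomputable def nuA (γ : ℝ → ℝ × ℝ) (s : ℝ) : ℝ × ℝ :=
  ((deriv γ s).2, -(deriv γ s).1)

/-- Curvature `κ = ⟨γ'', ν⟩` of a plane curve parametrised by arc length. -/
noncomputable def curvA (γ : ℝ → ℝ × ℝ) (s : ℝ) : ℝ :=
  innerP (deriv (deriv γ) s) (nuA γ s)

/-!
The curvature of a closed stationary curve is periodic and affine, hence constant. It is not zero,
since otherwise the curve itself would be periodic and affine, hence constant. Along a curve of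
constant nonzero curvature `κ` the centre of curvature `γ + κ⁻¹ ν` does not move, because
`ν' = -κ γ'`, and the curve stays at distance `|κ|⁻¹` from it.
-/

section Periodic

variable {𝕜 E : Type*} [RCLike 𝕜] [NormedAddCommGroup E] [NormedSpace 𝕜 E] {f : 𝕜 → E}

theorem eq_add_smul_of_deriv_eq {v : E} (hf : Differentiable 𝕜 f) (hv : ∀ t, deriv f t = v)
    (t : 𝕜) : f t = f 0 + t • v := by
  have hderiv (u : 𝕜) : HasDerivAt (f - fun u ↦ u • v) 0 u := by
    simpa [hv u] using (hf u).hasDerivAt.sub ((hasDerivAt_id u).smul_const v)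
  have hconst : f t - t • v = f 0 - (0 : 𝕜) • v :=
    is_const_of_deriv_eq_zero (fun u ↦ (hderiv u).differentiableAt) (fun u ↦ (hderiv u).deriv) t 0
  rwa [zero_smul, sub_zero, sub_eq_iff_eq_add] at hconst

theorem eq_of_periodic_of_deriv_deriv_eq_zero {L : 𝕜} (hL : L ≠ 0) (hper : Function.Periodic f L)
    (hf : Differentiable 𝕜 f) (hf' : Differentiable 𝕜 (deriv f))
    (hf'' : ∀ t, deriv (deriv f) t = 0) (t : 𝕜) : f t = f 0 := by
  have haffine := eq_add_smul_of_deriv_eq hf fun u ↦ is_const_of_deriv_eq_zero hf' hf'' u 0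
  have hslope : deriv f 0 = 0 := by
    have hL_smul : L • deriv f 0 = 0 := by simpa [hper.eq] using haffine L
    exact (smul_eq_zero.mp hL_smul).resolve_left hL
  simpa [hslope] using haffine t

end Periodic

theorem periodic_deriv_s4 {𝕜 E : Type*} [NontriviallyNormedField 𝕜] [NormedAddCommGroup E]
    [NormedSpace 𝕜 E] {f : 𝕜 → E} {c : 𝕜} (hf : Function.Periodic f c) :
    Function.Periodic (deriv f) c := fun t ↦ by
  rw [← deriv_comp_add_const, hf.funext]

/-- The plane curve `γ` is parametrised by arc length. The Euclidean norm is written out because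
the norm of `ℝ × ℝ` is the sup norm. -/
def IsUnitSpeed (γ : ℝ → ℝ × ℝ) : Prop :=
  ∀ s, (deriv γ s).1 ^ 2 + (deriv γ s).2 ^ 2 = 1

/-- The evolute `γ + κ⁻¹ ν` of a plane curve parametrised by arc length, that is, its curve of
centres of curvature. Where `κ = 0` it takes the junk value `γ`. -/
noncomputable def evolute (γ : ℝ → ℝ × ℝ) (s : ℝ) : ℝ × ℝ :=
  γ s + (curvA γ s)⁻¹ • nuA γ s

variable {γ : ℝ → ℝ × ℝ} {s L : ℝ}

theorem contDiff_curvA {n : WithTop ℕ∞} (hγ : ContDiff ℝ (n + 2) γ) :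
    ContDiff ℝ n (curvA γ) := by
  rw [← one_add_one_eq_two, ← add_assoc] at hγ
  have hγ' : ContDiff ℝ n (deriv γ) := hγ.deriv'.of_le le_self_add
  have hγ'' : ContDiff ℝ n (deriv (deriv γ)) := hγ.deriv'.deriv'
  exact (hγ''.fst.mul hγ'.snd).add (hγ''.snd.mul hγ'.fst.neg)

theorem periodic_curvA (hγ : Function.Periodic γ L) : Function.Periodic (curvA γ) L := fun s ↦ by
  simp only [curvA, nuA, periodic_deriv_s4 hγ s, periodic_deriv_s4 (periodic_deriv_s4 hγ) s]

namespace IsUnitSpeed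

theorem deriv_ne_zero (hγ : IsUnitSpeed γ) (s : ℝ) : deriv γ s ≠ 0 := fun h ↦ by
  simpa [h] using hγ s

theorem differentiable (hγ : IsUnitSpeed γ) : Differentiable ℝ γ := fun s ↦
  differentiableAt_of_deriv_ne_zero (hγ.deriv_ne_zero s)

theorem innerP_deriv_deriv_deriv (hγ : IsUnitSpeed γ) (hγ' : DifferentiableAt ℝ (deriv γ) s) :
    innerP (deriv (deriv γ) s) (deriv γ s) = 0 := by
  have hx : HasDerivAt (fun t ↦ (deriv γ t).1) (deriv (deriv γ) s).1 s := hγ'.hasDerivAt.fst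
  have hy : HasDerivAt (fun t ↦ (deriv γ t).2) (deriv (deriv γ) s).2 s := hγ'.hasDerivAt.snd
  have hspeed : HasDerivAt (fun t ↦ (deriv γ t).1 ^ 2 + (deriv γ t).2 ^ 2) 0 s :=
    funext hγ ▸ hasDerivAt_const s 1
  have hsum : 2 * (deriv γ s).1 * (deriv (deriv γ) s).1 +
      2 * (deriv γ s).2 * (deriv (deriv γ) s).2 = 0 := by
    simpa using ((hx.pow 2).add (hy.pow 2)).unique hspeed
  rw [innerP]
  linarith

theorem hasDerivAt_deriv (hγ : IsUnitSpeed γ) (hγ' : DifferentiableAt ℝ (deriv γ) s) :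
    HasDerivAt (deriv γ) (curvA γ s • nuA γ s) s := by
  have hunit := hγ s
  have horth := hγ.innerP_deriv_deriv_deriv hγ'
  have hfrenet : deriv (deriv γ) s = curvA γ s • nuA γ s := by
    simp only [innerP] at horth
    ext <;> simp only [curvA, innerP, nuA, Prod.smul_mk, smul_eq_mul]
    · linear_combination (-(deriv (deriv γ) s).1) * hunit + (deriv γ s).1 * horth
    · linear_combination (-(deriv (deriv γ) s).2) * hunit + (deriv γ s).2 * horth
  exact hfrenet ▸ hγ'.hasDerivAt

theorem hasDerivAt_nuA (hγ : IsUnitSpeed γ) (hγ' : DifferentiableAt ℝ (deriv γ) s) :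
    HasDerivAt (nuA γ) (-curvA γ s • deriv γ s) s := by
  have hT := hγ.hasDerivAt_deriv hγ'
  have hx : HasDerivAt (fun t ↦ (deriv γ t).1) (curvA γ s * (deriv γ s).2) s := hT.fst
  have hy : HasDerivAt (fun t ↦ (deriv γ t).2) (curvA γ s * -(deriv γ s).1) s := hT.snd
  exact (hy.prodMk hx.neg).congr_deriv (by ext <;> simp)

theorem hasDerivAt_evolute (hγ : IsUnitSpeed γ) (hγ' : DifferentiableAt ℝ (deriv γ) s) {κ' : ℝ}
    (hκ' : HasDerivAt (curvA γ) κ' s) (hκ : curvA γ s ≠ 0) :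
    HasDerivAt (evolute γ) ((-κ' / curvA γ s ^ 2) • nuA γ s) s := by
  refine ((hγ.differentiable s).hasDerivAt.add
    ((hκ'.inv hκ).smul (hγ.hasDerivAt_nuA hγ'))).congr_deriv ?_
  simp [smul_smul, hκ]

theorem sqrt_sub_evolute (hγ : IsUnitSpeed γ) (s : ℝ) :
    √(((γ s).1 - (evolute γ s).1) ^ 2 + ((γ s).2 - (evolute γ s).2) ^ 2) = |(curvA γ s)⁻¹| := by
  rw [← Real.sqrt_sq_eq_abs]
  congr 1
  simp only [evolute, nuA, Prod.fst_add, Prod.snd_add, Prod.smul_fst, Prod.smul_snd, smul_eq_mul]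
  linear_combination (curvA γ s)⁻¹ ^ 2 * hγ s

theorem evolute_eq_of_curvA_eq (hγ : IsUnitSpeed γ) (hγ' : Differentiable ℝ (deriv γ)) {k : ℝ}
    (hk : k ≠ 0) (hκ : ∀ s, curvA γ s = k) (s t : ℝ) : evolute γ s = evolute γ t := by
  have hderiv (u : ℝ) : HasDerivAt (evolute γ) 0 u := by
    have hκ' : HasDerivAt (curvA γ) 0 u := funext hκ ▸ hasDerivAt_const u k
    simpa using hγ.hasDerivAt_evolute (hγ' u) hκ' (hκ u ▸ hk)
  exact is_const_of_deriv_eq_zero (fun u ↦ (hderiv u).differentiableAt)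
    (fun u ↦ (hderiv u).deriv) s t

theorem exists_curvA_ne_zero (hγ : IsUnitSpeed γ) (hγ' : Differentiable ℝ (deriv γ)) (hL : L ≠ 0)
    (hper : Function.Periodic γ L) : ∃ s, curvA γ s ≠ 0 := by
  by_contra! hκ
  have hγ'' (s : ℝ) : deriv (deriv γ) s = 0 := by
    rw [(hγ.hasDerivAt_deriv (hγ' s)).deriv, hκ s, zero_smul]
  have hconst : γ = fun _ ↦ γ 0 := funext <|
    eq_of_periodic_of_deriv_deriv_eq_zero hL hper hγ.differentiable hγ' hγ''
  exact hγ.deriv_ne_zero 0 (by rw [hconst, deriv_const])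

end IsUnitSpeed

theorem closed_stationary_is_circle_general (hC4 : ContDiff ℝ 4 γ) (hunit : IsUnitSpeed γ)
    (hL : L ≠ 0) (hper : Function.Periodic γ L) (hstat : ∀ s, deriv (deriv (curvA γ)) s = 0) :
    ∃ c : ℝ × ℝ, ∃ R : ℝ, 0 < R ∧
      ∀ s, √(((γ s).1 - c.1) ^ 2 + ((γ s).2 - c.2) ^ 2) = R := by
  have hγ' : Differentiable ℝ (deriv γ) := (hC4.of_le (by norm_num)).differentiable_deriv_two
  have hκ2 : ContDiff ℝ 2 (curvA γ) := contDiff_curvA (hC4.of_le (by norm_num))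
  have hκ : ∀ s, curvA γ s = curvA γ 0 :=
    eq_of_periodic_of_deriv_deriv_eq_zero hL (periodic_curvA hper)
      (hκ2.differentiable two_ne_zero) hκ2.differentiable_deriv_two hstat
  obtain ⟨s₀, hs₀⟩ := hunit.exists_curvA_ne_zero hγ' hL hper
  have hκ0 : curvA γ 0 ≠ 0 := hκ s₀ ▸ hs₀
  refine ⟨evolute γ 0, |(curvA γ 0)⁻¹|, abs_pos.mpr (inv_ne_zero hκ0), fun s ↦ ?_⟩
  rw [← hunit.evolute_eq_of_curvA_eq hγ' hκ0 hκ s, hunit.sqrt_sub_evolute, hκ s]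

/-- a closed stationary solution of the curve diffusion flow (`κ'' ≡ 0`)
is a round circle. -/
theorem closed_stationary_is_circle
    (γ : ℝ → ℝ × ℝ) (L : ℝ) (hL : 0 < L)
    (hsmooth : ContDiff ℝ (⊤ : ℕ∞) γ)
    (hunit : ∀ s, (deriv γ s).1 ^ 2 + (deriv γ s).2 ^ 2 = 1)
    (hper : ∀ s, γ (s + L) = γ s)
    (hstat : ∀ s, deriv (deriv (curvA γ)) s = 0) :
    ∃ c : ℝ × ℝ, ∃ R : ℝ, 0 < R ∧
      ∀ s, Real.sqrt (((γ s).1 - c.1) ^ 2 + ((γ s).2 - c.2) ^ 2) = R :=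
  closed_stationary_is_circle_general (contDiff_infty.mp hsmooth 4) hunit hL.ne' hper hstat
end
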